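/- arXiv:1104.2804 — 4 statements merged into one kernel-verified Lean document; each statement's English description precedes it below -/
import Mathlib

section
/- For all natural numbers n and k with k < n, two applications of the Collatz map send 3^k·2^(n−k) − 1 to 3^(k+1)·2^(n−k−1) − 1; that is, T^[2](3^k·2^(n−k) − 1) = 3^(k+1)·2^(n−k−1) − 1. -/
/-- The Collatz map: `T x = x / 2` if `x` is even, `3 * x + 1` if `x` is odd. -/
def T (x : ℕ) : ℕ := if x % 2 = 0 then x / 2 else 3 * x + 1

theorem two_step_collatz (n k : ℕ) (hk : k < n) :
    T^[2] (3 ^ k * 2 ^ (n - k) - 1) = 3 ^ (k + 1) * 2 ^ (n - k - 1) - 1 := by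
  obtain ⟨m, rfl⟩ : ∃ m, n = k + m + 1 := ⟨n - k - 1, by omega⟩
  have h1 : k + m + 1 - k = m + 1 := by omega
  have hpos : 0 < 3 ^ k * 2 ^ m := by positivity
  have h2 : 3 ^ k * 2 ^ (m + 1) = 2 * (3 ^ k * 2 ^ m) := by ring
  have h3 : 3 ^ (k + 1) * 2 ^ m = 3 * (3 ^ k * 2 ^ m) := by ring
  rw [h1, Nat.add_sub_cancel, h2, h3]
  generalize 3 ^ k * 2 ^ m = a at hpos
  have e1 : T (2 * a - 1) = 6 * a - 2 := by
    unfold T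
    rw [if_neg (by omega)]
    omega
  have e2 : T (6 * a - 2) = 3 * a - 1 := by
    unfold T
    rw [if_pos (by omega)]
    omega
  change T (T (2 * a - 1)) = 3 * a - 1
  rw [e1, e2]
end

section
/- For every natural number n, the Mersenne number 2^n − 1 is sent to 3^n − 1 after exactly 2n applications of the Collatz map; that is, T^[2n](2^n − 1) = 3^n − 1. -/
theorem T_iterate_aux (n : ℕ) : ∀ a : ℕ, 1 ≤ a → T^[2 * n] (a * 2 ^ n - 1) = a * 3 ^ n - 1 := by
  induction n with
  | zero => intro a _; simp
  | succ n ih =>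
    intro a ha
    have hpos : 1 ≤ a * 2 ^ n := Nat.mul_pos ha (by positivity)
    have e : a * 2 ^ (n + 1) = 2 * (a * 2 ^ n) := by ring
    have e3 : 3 * a * 2 ^ n = 3 * (a * 2 ^ n) := by ring
    have step : T (T (a * 2 ^ (n + 1) - 1)) = 3 * a * 2 ^ n - 1 := by
      rw [e, e3]
      generalize a * 2 ^ n = b at hpos
      have h1 : T (2 * b - 1) = 2 * (3 * b - 1) := by
        unfold T
        rw [if_neg (by omega)]
        omega
      rw [h1]
      unfold T
      rw [if_pos (by omega)]
      omega
    rw [show 2 * (n + 1) = 2 * n + 1 + 1 by ring, Function.iterate_succ_apply,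
      Function.iterate_succ_apply, step, ih (3 * a) (by omega)]
    congr 1
    ring

theorem mersenne_reaches_three_pow (n : ℕ) :
    T^[2 * n] (2 ^ n - 1) = 3 ^ n - 1 := by
  simpa using T_iterate_aux n 1 le_rfl
end

section
/- For every natural number n ≥ 2 and every k ≤ 2n, the k-th iterate of the Collatz map at 2^n − 1 satisfies T^[k](2^n − 1) > 1; in particular the trajectory of 2^n − 1 does not reach 1 within its first 2n steps. -/
theorem aux (m : ℕ) : ∀ a : ℕ, 3 ≤ a * 2 ^ m → ∀ k ≤ 2 * m, 1 < T^[k] (a * 2 ^ m - 1) := by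
  induction m with
  | zero =>
    intro a ha k hk
    obtain rfl : k = 0 := by omega
    simp only [Function.iterate_zero, id]
    omega
  | succ m ih =>
    intro a ha k hk
    have e : a * 2 ^ (m + 1) = 2 * (a * 2 ^ m) := by ring
    have e3 : 3 * a * 2 ^ m = 3 * (a * 2 ^ m) := by ring
    have h3 := ih (3 * a)
    rw [e3] at h3
    rw [e] at ha ⊢
    generalize a * 2 ^ m = y at ha h3 ⊢
    have h1 : T (2 * y - 1) = 3 * (2 * y - 1) + 1 := by
      unfold T
      rw [if_neg (by omega)]
    have h2 : T (3 * (2 * y - 1) + 1) = 3 * y - 1 := by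
      unfold T
      rw [if_pos (by omega)]
      omega
    match k, hk with
    | 0, _ =>
      simp only [Function.iterate_zero, id]
      omega
    | 1, _ =>
      simp only [Function.iterate_one, h1]
      omega
    | k + 2, hk =>
      rw [Function.iterate_succ_apply, Function.iterate_succ_apply, h1, h2]
      exact h3 (by omega) k (by omega)

theorem mersenne_trajectory_stays_above_one (n : ℕ) (hn : 2 ≤ n) :
    ∀ k ≤ 2 * n, 1 < T^[k] (2 ^ n - 1) := by
  have h : 2 ^ 2 ≤ 2 ^ n := Nat.pow_le_pow_right (by norm_num) hn
  have := aux n 1 (by omega)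
  simpa only [one_mul] using this
end

section
/- Let n ≥ 2 be a natural number and suppose m is the least natural number with T^[m](3^n − 1) = 1. Then 2n + m is the least natural number k with T^[k](2^n − 1) = 1; equivalently, the Collatz–Kakutani path length of the Mersenne number satisfies D(2^n − 1) = 2n + D(3^n − 1). -/
theorem T_odd (b : ℕ) (hb : 1 ≤ b) : T (2 * b - 1) = 6 * b - 2 := by
  unfold T
  split_ifs <;> omega

theorem T_even (b : ℕ) (hb : 1 ≤ b) : T (6 * b - 2) = 3 * b - 1 := by
  unfold T
  split_ifs <;> omega

theorem T_iter (j : ℕ) : ∀ a : ℕ, 4 ≤ a * 2 ^ j →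
    T^[2 * j] (a * 2 ^ j - 1) = a * 3 ^ j - 1 ∧
      ∀ k < 2 * j, T^[k] (a * 2 ^ j - 1) ≠ 1 := by
  induction j with
  | zero => intro a _; simp
  | succ j ih =>
    intro a ha
    obtain ⟨b, hb⟩ : ∃ b, b = a * 2 ^ j := ⟨_, rfl⟩
    have e : a * 2 ^ (j + 1) = 2 * b := by rw [hb]; ring
    have e3 : 3 * a * 2 ^ j = 3 * b := by rw [hb]; ring
    have e4 : 3 * a * 3 ^ j = a * 3 ^ (j + 1) := by ring
    rw [e] at ha ⊢
    have h := ih (3 * a) (by omega)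
    rw [e3, e4] at h
    have step : ∀ k, T^[k + 2] (2 * b - 1) = T^[k] (3 * b - 1) := by
      intro k
      rw [Function.iterate_succ_apply, Function.iterate_succ_apply, T_odd b (by omega),
        T_even b (by omega)]
    refine ⟨?_, ?_⟩
    · rw [show 2 * (j + 1) = 2 * j + 2 by ring, step]
      exact h.1
    · intro k hk
      match k with
      | 0 => simp only [Function.iterate_zero, id]; omega
      | 1 => rw [Function.iterate_one, T_odd b (by omega)]; omega
      | k + 2 => rw [step]; exact h.2 k (by omega)

theorem mersenne_path_length_decomposition (n m : ℕ) (hn : 2 ≤ n)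
    (hm : IsLeast {k : ℕ | T^[k] (3 ^ n - 1) = 1} m) :
    IsLeast {k : ℕ | T^[k] (2 ^ n - 1) = 1} (2 * n + m) := by
  have h4 : 2 ^ 2 ≤ 2 ^ n := Nat.pow_le_pow_right (by norm_num) hn
  obtain ⟨h1, h2⟩ := T_iter n 1 (by omega)
  rw [one_mul, one_mul] at h1
  rw [one_mul] at h2
  have step : ∀ k, T^[2 * n + k] (2 ^ n - 1) = T^[k] (3 ^ n - 1) := by
    intro k
    rw [add_comm, Function.iterate_add_apply, h1]
  refine ⟨?_, ?_⟩
  · show T^[2 * n + m] (2 ^ n - 1) = 1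
    rw [step]
    exact hm.1
  · intro k hk
    have hk' : T^[k] (2 ^ n - 1) = 1 := hk
    by_contra hlt
    by_cases hkn : k < 2 * n
    · exact h2 k hkn hk'
    · obtain ⟨r, rfl⟩ := Nat.exists_eq_add_of_le (not_lt.mp hkn)
      rw [step] at hk'
      have := hm.2 hk'
      omega
end
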